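/- arXiv:2509.14538 — 2 statements merged into one kernel-verified Lean document; each statement's English description precedes it below -/
import Mathlib

section
/- Let n ≥ 2, λ > 0, L > 2λ, let g = 4π ∑_{j=1}^{k₁} m_j δ_{p_j}, h = 4π ∑_{j=1}^{k₂} n_j δ_{q_j} with m_j, n_j ∈ ℕ, and let Ω ⊂ ℤⁿ be a connected finite subset containing all the points p_j and q_j. Define sequences u_k, v_k : Ω̄ → ℝ by u₀ = v₀ = 0 and, for k ≥ 1, (Δ − L)u_k = λ e^{v_{k−1}} (e^{u_{k−1}} − 1) + g − L u_{k−1} in Ω, (Δ − L)v_k = λ e^{u_{k−1}} (e^{v_{k−1}} − 1) + h − L v_{k−1} in Ω, with u_k = v_k = 0 on δΩ. Then for each k the pair (u_k, v_k) exists and is uniquely determined, and the sequences are monotone: 0 = u₀ ≥ u₁ ≥ u₂ ≥ … and 0 = v₀ ≥ v₁ ≥ v₂ ≥ … on Ω̄. -/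
/-!
At a nonnegative maximum of `w` one has `Δ w ≤ 0`. For `L > 0` this gives `Δ - L` a comparison
principle on a finite set `Ω` with zero data off `Ω`, so the Dirichlet problem has at most one
solution; being a square linear system, it has exactly one. Existence and uniqueness of the
iterates follow.

The map `(s, t) ↦ λ e^t (e^s - 1) - L s` is antitone in both variables on the nonpositive quadrant
once `λ ≤ L`, because there `e^t ≤ 1` and `exp` is `1`-Lipschitz. A decrease of the iterates thus
raises the right-hand sides of the next two equations, and the comparison principle turns this into
a further decrease. The first step down, from `u₀ = v₀ = 0`, uses `g, h ≥ 0`.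
-/

open Filter Real

noncomputable section

namespace CS

abbrev Lat (n : ℕ) := Fin n → ℤ

/-- d(x) = ∑ᵢ |xᵢ|, the graph distance to the origin on ℤⁿ. -/
def latDist {n : ℕ} (x : Lat n) : ℕ := ∑ i, (x i).natAbs

/-- x ~ y iff ∑ᵢ |xᵢ − yᵢ| = 1. -/
def adjacent {n : ℕ} (x y : Lat n) : Prop := (∑ i, (x i - y i).natAbs) = 1

instance {n : ℕ} (x y : Lat n) : Decidable (adjacent x y) :=
  decidable_of_iff ((∑ i, (x i - y i).natAbs) = 1) Iff.rfl

def unitVec {n : ℕ} (i : Fin n) : Lat n := fun j => if j = i then 1 else 0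

/-- The graph Laplacian Δu(x) = ∑_{y ~ x} (u(y) − u(x)) on ℤⁿ. -/
def lapl {n : ℕ} (u : Lat n → ℝ) (x : Lat n) : ℝ :=
  ∑ i, (u (x + unitVec i) + u (x - unitVec i) - 2 * u x)

/-- The filter of neighborhoods of infinity (d(x) → +∞) on ℤⁿ. -/
def atInfty (n : ℕ) : Filter (Lat n) := Filter.comap latDist Filter.atTop

/-- The Dirac mass at p. -/
def dirac {n : ℕ} (p x : Lat n) : ℝ := if x = p then 1 else 0

/-- (u,v) is a topological solution of Δu = λ eᵛ(eᵘ−1) + g, Δv = λ eᵘ(eᵛ−1) + h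
with u, v → 0 at infinity. -/
def IsTopSol {n : ℕ} (lam : ℝ) (g h u v : Lat n → ℝ) : Prop :=
  (∀ x, lapl u x = lam * Real.exp (v x) * (Real.exp (u x) - 1) + g x) ∧
  (∀ x, lapl v x = lam * Real.exp (u x) * (Real.exp (v x) - 1) + h x) ∧
  Filter.Tendsto u (atInfty n) (nhds 0) ∧
  Filter.Tendsto v (atInfty n) (nhds 0)

/-- The boundary δΩ = {y ∉ Ω : ∃ x ∈ Ω, x ~ y}. -/
def bdry {n : ℕ} (Ω : Set (Lat n)) : Set (Lat n) := {y | y ∉ Ω ∧ ∃ x ∈ Ω, adjacent x y}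

/-- Ω is connected: any two of its vertices are joined by a path of adjacent
vertices lying in Ω. -/
def PathConnectedIn {n : ℕ} (Ω : Set (Lat n)) : Prop :=
  ∀ x ∈ Ω, ∀ y ∈ Ω, ∃ (k : ℕ) (c : ℕ → Lat n),
    c 0 = x ∧ c k = y ∧ (∀ i ≤ k, c i ∈ Ω) ∧ ∀ i < k, adjacent (c i) (c (i + 1))

/-- The iterative scheme: u₀ = v₀ = 0 and, for k ≥ 1,
(Δ − L)u_k = λ e^{v_{k−1}} (e^{u_{k−1}} − 1) + g − L u_{k−1} in Ω,
(Δ − L)v_k = λ e^{u_{k−1}} (e^{v_{k−1}} − 1) + h − L v_{k−1} in Ω,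
with u_k = v_k = 0 off Ω (in particular on δΩ). -/
def IterSeq {n : ℕ} (Ω : Set (Lat n)) (L lam : ℝ) (g h : Lat n → ℝ)
    (u v : ℕ → Lat n → ℝ) : Prop :=
  (∀ x, u 0 x = 0) ∧ (∀ x, v 0 x = 0) ∧
  (∀ k : ℕ, ∀ x ∈ Ω,
      lapl (u (k + 1)) x - L * u (k + 1) x
        = lam * Real.exp (v k x) * (Real.exp (u k x) - 1) + g x - L * u k x) ∧
  (∀ k : ℕ, ∀ x ∈ Ω,
      lapl (v (k + 1)) x - L * v (k + 1) x
        = lam * Real.exp (u k x) * (Real.exp (v k x) - 1) + h x - L * v k x) ∧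
  (∀ k : ℕ, ∀ x, x ∉ Ω → u (k + 1) x = 0) ∧
  (∀ k : ℕ, ∀ x, x ∉ Ω → v (k + 1) x = 0)

section DirichletProblem

variable {V : Type*} {A : (V → ℝ) →ₗ[ℝ] V → ℝ} {Ω : Set V} {L : ℝ} {f f' w w' : V → ℝ}

/-- The positive maximum principle: `A w` is nonpositive wherever `w` attains a nonnegative global
maximum. Graph Laplacians satisfy it, and it yields the comparison principle for `A - L`. -/
def PositiveMaximumPrinciple (A : (V → ℝ) →ₗ[ℝ] V → ℝ) : Prop :=
  ∀ ⦃w : V → ℝ⦄ ⦃x : V⦄, 0 ≤ w x → (∀ y, w y ≤ w x) → A w x ≤ 0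

/-- `w` solves the Dirichlet problem `(A - L) w = f` in `Ω`. The zero boundary condition is imposed
on the whole complement of `Ω`, as in `IterSeq`. -/
structure IsDirichletSolution (A : (V → ℝ) →ₗ[ℝ] V → ℝ) (L : ℝ) (Ω : Set V) (f w : V → ℝ) :
    Prop where
  apply_sub : ∀ x ∈ Ω, A w x - L * w x = f x
  eq_zero : ∀ x ∉ Ω, w x = 0

lemma PositiveMaximumPrinciple.nonpos (hA : PositiveMaximumPrinciple A) (hΩ : Ω.Finite)
    (hL : 0 < L) (hw : ∀ x ∈ Ω, 0 ≤ A w x - L * w x) (hw_off : ∀ x ∉ Ω, w x ≤ 0) : w ≤ 0 := by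
  intro x
  by_contra! hx
  have mem_of_pos {y : V} (hy : 0 < w y) : y ∈ Ω := not_imp_comm.1 (hw_off y) hy.not_ge
  obtain ⟨z, hz, hmax⟩ := Set.exists_max_image Ω w hΩ ⟨x, mem_of_pos hx⟩
  have hz_pos : 0 < w z := hx.trans_le (hmax x (mem_of_pos hx))
  have hz_max (y : V) : w y ≤ w z :=
    (le_or_gt (w y) 0).elim (fun hy => hy.trans hz_pos.le) fun hy => hmax y (mem_of_pos hy)
  linarith [hw z hz, hA hz_pos.le hz_max, mul_pos hL hz_pos]

lemma IsDirichletSolution.sub (hw : IsDirichletSolution A L Ω f w)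
    (hw' : IsDirichletSolution A L Ω f' w') :
    IsDirichletSolution A L Ω (f - f') (w - w') where
  apply_sub x hx := by
    rw [map_sub, Pi.sub_apply, Pi.sub_apply, Pi.sub_apply, ← hw.apply_sub x hx,
      ← hw'.apply_sub x hx]
    ring
  eq_zero x hx := by rw [Pi.sub_apply, hw.eq_zero x hx, hw'.eq_zero x hx, sub_zero]

lemma IsDirichletSolution.zero : IsDirichletSolution A L Ω 0 0 where
  apply_sub x _ := by simp
  eq_zero _ _ := rfl

lemma IsDirichletSolution.le (hA : PositiveMaximumPrinciple A) (hΩ : Ω.Finite) (hL : 0 < L)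
    (hw : IsDirichletSolution A L Ω f w) (hw' : IsDirichletSolution A L Ω f' w')
    (hff' : ∀ x ∈ Ω, f' x ≤ f x) : w ≤ w' :=
  have hsub := hw.sub hw'
  sub_nonpos.1 <| hA.nonpos hΩ hL
    (fun x hx => (hsub.apply_sub x hx).symm ▸ sub_nonneg.2 (hff' x hx))
    fun x hx => (hsub.eq_zero x hx).le

lemma IsDirichletSolution.unique (hA : PositiveMaximumPrinciple A) (hΩ : Ω.Finite) (hL : 0 < L)
    (hw : IsDirichletSolution A L Ω f w) (hw' : IsDirichletSolution A L Ω f w') : w = w' :=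
  le_antisymm (hw.le hA hΩ hL hw' fun _ _ => le_rfl) (hw'.le hA hΩ hL hw fun _ _ => le_rfl)

/-- The operator `A - L` with zero Dirichlet data, as an endomorphism of the functions on `Ω`:
extend by zero, apply `A - L`, restrict to `Ω`. -/
def dirichletOp (A : (V → ℝ) →ₗ[ℝ] V → ℝ) (L : ℝ) (Ω : Set V) : (Ω → ℝ) →ₗ[ℝ] Ω → ℝ :=
  LinearMap.funLeft ℝ ℝ Subtype.val ∘ₗ (A - L • LinearMap.id) ∘ₗ
    Function.ExtendByZero.linearMap ℝ Subtype.val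

lemma isDirichletSolution_extend {φ : Ω → ℝ} (hφ : ∀ x : Ω, dirichletOp A L Ω φ x = f x) :
    IsDirichletSolution A L Ω f (Function.extend Subtype.val φ 0) where
  apply_sub x hx := hφ ⟨x, hx⟩
  eq_zero x hx := Function.extend_apply' φ (0 : V → ℝ) x fun ⟨y, hy⟩ => hx (hy ▸ y.2)

lemma PositiveMaximumPrinciple.dirichletOp_injective (hA : PositiveMaximumPrinciple A)
    (hΩ : Ω.Finite) (hL : 0 < L) : Function.Injective (dirichletOp A L Ω) := by
  refine (injective_iff_map_eq_zero _).2 fun φ hφ => ?_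
  have hextend : Function.extend Subtype.val φ 0 = (0 : V → ℝ) :=
    (isDirichletSolution_extend (congrFun hφ)).unique hA hΩ hL .zero
  funext x
  exact (Subtype.val_injective.extend_apply φ 0 x).symm.trans (congrFun hextend x)

lemma PositiveMaximumPrinciple.exists_isDirichletSolution (hA : PositiveMaximumPrinciple A)
    (hΩ : Ω.Finite) (hL : 0 < L) (f : V → ℝ) : ∃ w, IsDirichletSolution A L Ω f w := by
  have : Finite Ω := hΩ
  have hsurj : Function.Surjective (dirichletOp A L Ω) :=
    LinearMap.injective_iff_surjective.1 (hA.dirichletOp_injective hΩ hL)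
  obtain ⟨φ, hφ⟩ := hsurj fun x => f x
  exact ⟨_, isDirichletSolution_extend (congrFun hφ)⟩

end DirichletProblem

section Nonlinearity

variable {s s' t t' : ℝ}

lemma exp_sub_exp_le_sub (hs' : s' ≤ s) (hs : s ≤ 0) : exp s - exp s' ≤ s - s' :=
  calc
    exp s - exp s' = exp s * (1 - exp (s' - s)) := by rw [exp_sub]; field_simp
    _ ≤ exp s * (s - s') :=
        mul_le_mul_of_nonneg_left (by linarith [add_one_le_exp (s' - s)]) (exp_pos s).le
    _ ≤ s - s' := mul_le_of_le_one_left (sub_nonneg.2 hs') (exp_le_one_iff.2 hs)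

lemma exp_mul_exp_sub_one_sub_le (hs' : s' ≤ s) (hs : s ≤ 0) (ht' : t' ≤ t) (ht : t ≤ 0) :
    exp t * (exp s - 1) - exp t' * (exp s' - 1) ≤ s - s' :=
  calc
    exp t * (exp s - 1) - exp t' * (exp s' - 1)
        = exp t' * (exp s - exp s') - (exp t - exp t') * (1 - exp s) := by ring
    _ ≤ exp t' * (exp s - exp s') := sub_le_self _ <|
        mul_nonneg (sub_nonneg.2 (exp_le_exp.2 ht')) (sub_nonneg.2 (exp_le_one_iff.2 hs))
    _ ≤ exp s - exp s' := mul_le_of_le_one_left (sub_nonneg.2 (exp_le_exp.2 hs'))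
        (exp_le_one_iff.2 (ht'.trans ht))
    _ ≤ s - s' := exp_sub_exp_le_sub hs' hs

end Nonlinearity

section Scheme

variable {V : Type*} {A : (V → ℝ) →ₗ[ℝ] V → ℝ} {Ω : Set V} {L lam : ℝ} {g h : V → ℝ}

/-- The right-hand side `λ e^v (e^u - 1) + g - L u` of one equation of the scheme, with `(u, v)` the
previous iterate. The other equation is obtained by exchanging `u` and `v`. -/
def schemeRHS (L lam : ℝ) (g u v : V → ℝ) (x : V) : ℝ :=
  lam * exp (v x) * (exp (u x) - 1) + g x - L * u x

lemma schemeRHS_zero : schemeRHS L lam g 0 0 = g := by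
  funext x
  simp [schemeRHS]

lemma schemeRHS_anti (hlam : 0 ≤ lam) (hlamL : lam ≤ L) {u u' v v' : V → ℝ} (hu' : u' ≤ u)
    (hu : u ≤ 0) (hv' : v' ≤ v) (hv : v ≤ 0) :
    schemeRHS L lam g u v ≤ schemeRHS L lam g u' v' := by
  intro x
  have hincr : lam * (exp (v x) * (exp (u x) - 1) - exp (v' x) * (exp (u' x) - 1))
      ≤ L * (u x - u' x) :=
    calc
      _ ≤ lam * (u x - u' x) := mul_le_mul_of_nonneg_left
          (exp_mul_exp_sub_one_sub_le (hu' x) (hu x) (hv' x) (hv x)) hlam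
      _ ≤ L * (u x - u' x) := mul_le_mul_of_nonneg_right hlamL (sub_nonneg.2 (hu' x))
  unfold schemeRHS
  linarith

/-- The iterative scheme `IterSeq` with an arbitrary linear operator `A` on functions on `V` in
place of the lattice Laplacian. -/
structure IsIterScheme (A : (V → ℝ) →ₗ[ℝ] V → ℝ) (Ω : Set V) (L lam : ℝ) (g h : V → ℝ)
    (u v : ℕ → V → ℝ) : Prop where
  zero_left : u 0 = 0
  zero_right : v 0 = 0
  succ_left : ∀ k, IsDirichletSolution A L Ω (schemeRHS L lam g (u k) (v k)) (u (k + 1))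
  succ_right : ∀ k, IsDirichletSolution A L Ω (schemeRHS L lam h (v k) (u k)) (v (k + 1))

lemma PositiveMaximumPrinciple.exists_isIterScheme (hA : PositiveMaximumPrinciple A)
    (hΩ : Ω.Finite) (hL : 0 < L) (lam : ℝ) (g h : V → ℝ) :
    ∃ u v, IsIterScheme A Ω L lam g h u v := by
  choose solve hsolve using hA.exists_isDirichletSolution hΩ hL
  let next (w : (V → ℝ) × (V → ℝ)) : (V → ℝ) × (V → ℝ) :=
    (solve (schemeRHS L lam g w.1 w.2), solve (schemeRHS L lam h w.2 w.1))
  let iter (k : ℕ) : (V → ℝ) × (V → ℝ) := Nat.rec 0 (fun _ => next) k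
  exact ⟨fun k => (iter k).1, fun k => (iter k).2, rfl, rfl, fun _ => hsolve _, fun _ => hsolve _⟩

namespace IsIterScheme

variable {u v u' v' : ℕ → V → ℝ} {k : ℕ}

lemma swap (huv : IsIterScheme A Ω L lam g h u v) : IsIterScheme A Ω L lam h g v u :=
  ⟨huv.zero_right, huv.zero_left, huv.succ_right, huv.succ_left⟩

lemma succ_left_unique (hA : PositiveMaximumPrinciple A) (hΩ : Ω.Finite) (hL : 0 < L)
    (huv : IsIterScheme A Ω L lam g h u v) (huv' : IsIterScheme A Ω L lam g h u' v')
    (hu : u k = u' k) (hv : v k = v' k) : u (k + 1) = u' (k + 1) :=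
  (huv.succ_left k).unique hA hΩ hL (by simpa only [hu, hv] using huv'.succ_left k)

lemma unique (hA : PositiveMaximumPrinciple A) (hΩ : Ω.Finite) (hL : 0 < L)
    (huv : IsIterScheme A Ω L lam g h u v) (huv' : IsIterScheme A Ω L lam g h u' v') :
    u = u' ∧ v = v' := by
  have hk (k : ℕ) : u k = u' k ∧ v k = v' k := by
    induction k with
    | zero =>
      exact ⟨huv.zero_left.trans huv'.zero_left.symm, huv.zero_right.trans huv'.zero_right.symm⟩
    | succ k ih =>
      exact ⟨huv.succ_left_unique hA hΩ hL huv' ih.1 ih.2,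
        huv.swap.succ_left_unique hA hΩ hL huv'.swap ih.2 ih.1⟩
  exact ⟨funext fun k => (hk k).1, funext fun k => (hk k).2⟩

lemma one_left_nonpos (hA : PositiveMaximumPrinciple A) (hΩ : Ω.Finite) (hL : 0 < L)
    (hg : ∀ x ∈ Ω, 0 ≤ g x) (huv : IsIterScheme A Ω L lam g h u v) : u 1 ≤ 0 := by
  have hone : IsDirichletSolution A L Ω g (u 1) := by
    simpa only [huv.zero_left, huv.zero_right, schemeRHS_zero] using huv.succ_left 0
  exact hone.le hA hΩ hL .zero hg

lemma succ_succ_left_le (hA : PositiveMaximumPrinciple A) (hΩ : Ω.Finite) (hL : 0 < L)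
    (hlam : 0 ≤ lam) (hlamL : lam ≤ L) (huv : IsIterScheme A Ω L lam g h u v)
    (hu_succ : u (k + 1) ≤ u k) (hu : u k ≤ 0) (hv_succ : v (k + 1) ≤ v k) (hv : v k ≤ 0) :
    u (k + 2) ≤ u (k + 1) :=
  (huv.succ_left (k + 1)).le hA hΩ hL (huv.succ_left k) fun x _ =>
    schemeRHS_anti hlam hlamL hu_succ hu hv_succ hv x

lemma succ_le (hA : PositiveMaximumPrinciple A) (hΩ : Ω.Finite) (hL : 0 < L) (hlam : 0 ≤ lam)
    (hlamL : lam ≤ L) (hg : ∀ x ∈ Ω, 0 ≤ g x) (hh : ∀ x ∈ Ω, 0 ≤ h x)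
    (huv : IsIterScheme A Ω L lam g h u v) (k : ℕ) :
    u (k + 1) ≤ u k ∧ v (k + 1) ≤ v k := by
  suffices (u (k + 1) ≤ u k ∧ v (k + 1) ≤ v k) ∧ u k ≤ 0 ∧ v k ≤ 0 from this.1
  induction k with
  | zero =>
    rw [huv.zero_left, huv.zero_right]
    exact ⟨⟨huv.one_left_nonpos hA hΩ hL hg, huv.swap.one_left_nonpos hA hΩ hL hh⟩, le_rfl, le_rfl⟩
  | succ k ih =>
    obtain ⟨⟨hu_succ, hv_succ⟩, hu, hv⟩ := ih
    exact ⟨⟨huv.succ_succ_left_le hA hΩ hL hlam hlamL hu_succ hu hv_succ hv,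
      huv.swap.succ_succ_left_le hA hΩ hL hlam hlamL hv_succ hv hu_succ hu⟩,
      hu_succ.trans hu, hv_succ.trans hv⟩

end IsIterScheme

theorem iterative_scheme_exists_unique_monotone_general (hA : PositiveMaximumPrinciple A)
    (hΩ : Ω.Finite) (hL : 0 < L) (hlam : 0 ≤ lam) (hlamL : lam ≤ L) (hg : ∀ x ∈ Ω, 0 ≤ g x)
    (hh : ∀ x ∈ Ω, 0 ≤ h x) :
    (∃ u v : ℕ → V → ℝ, IsIterScheme A Ω L lam g h u v) ∧
    (∀ u v u' v' : ℕ → V → ℝ,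
      IsIterScheme A Ω L lam g h u v → IsIterScheme A Ω L lam g h u' v' → u = u' ∧ v = v') ∧
    (∀ u v : ℕ → V → ℝ, IsIterScheme A Ω L lam g h u v →
      ∀ (k : ℕ) (x : V), u (k + 1) x ≤ u k x ∧ v (k + 1) x ≤ v k x) :=
  ⟨hA.exists_isIterScheme hΩ hL lam g h,
    fun _ _ _ _ huv huv' => huv.unique hA hΩ hL huv',
    fun _ _ huv k x =>
      have hle := huv.succ_le hA hΩ hL hlam hlamL hg hh k
      ⟨hle.1 x, hle.2 x⟩⟩

end Scheme

section Lattice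

variable {n : ℕ}

/-- The lattice Laplacian `lapl` as a linear map. -/
def laplLinearMap (n : ℕ) : (Lat n → ℝ) →ₗ[ℝ] Lat n → ℝ where
  toFun := lapl
  map_add' u v := by
    funext x
    simp only [lapl, Pi.add_apply, ← Finset.sum_add_distrib]
    exact Finset.sum_congr rfl fun i _ => by ring
  map_smul' c u := by
    funext x
    simp only [lapl, Pi.smul_apply, smul_eq_mul, Finset.mul_sum, RingHom.id_apply]
    exact Finset.sum_congr rfl fun i _ => by ring

lemma positiveMaximumPrinciple_laplLinearMap : PositiveMaximumPrinciple (laplLinearMap n) :=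
  fun w x _ hmax => show ∑ i, (w (x + unitVec i) + w (x - unitVec i) - 2 * w x) ≤ 0 from
    Finset.sum_nonpos fun i _ => by linarith [hmax (x + unitVec i), hmax (x - unitVec i)]

lemma iterSeq_iff_isIterScheme {Ω : Set (Lat n)} {L lam : ℝ} {g h : Lat n → ℝ}
    {u v : ℕ → Lat n → ℝ} :
    IterSeq Ω L lam g h u v ↔ IsIterScheme (laplLinearMap n) Ω L lam g h u v := by
  constructor
  · rintro ⟨hu0, hv0, hu, hv, hu_off, hv_off⟩
    exact ⟨funext hu0, funext hv0, fun k => ⟨hu k, hu_off k⟩, fun k => ⟨hv k, hv_off k⟩⟩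
  · rintro ⟨hu0, hv0, hu, hv⟩
    exact ⟨congrFun hu0, congrFun hv0, fun k => (hu k).apply_sub, fun k => (hv k).apply_sub,
      fun k => (hu k).eq_zero, fun k => (hv k).eq_zero⟩

lemma four_pi_mul_sum_dirac_nonneg {ι : Type*} [Fintype ι] (m : ι → ℕ) (p : ι → Lat n)
    (x : Lat n) : 0 ≤ 4 * π * ∑ j, (m j : ℝ) * dirac (p j) x := by
  have dirac_nonneg (j : ι) : 0 ≤ dirac (p j) x := ite_nonneg zero_le_one le_rfl
  exact mul_nonneg (by positivity)
    (Finset.sum_nonneg fun j _ => mul_nonneg (m j).cast_nonneg (dirac_nonneg j))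

end Lattice

/-- the iterative sequences (u_k, v_k) exist, are uniquely
determined, and are monotone nonincreasing: 0 = u₀ ≥ u₁ ≥ … and
0 = v₀ ≥ v₁ ≥ …. -/
theorem iterative_scheme_exists_unique_monotone
    {n : ℕ} (hn : 2 ≤ n) (lam L : ℝ) (hlam : 0 < lam) (hL : 2 * lam < L)
    {k₁ k₂ : ℕ} (m : Fin k₁ → ℕ) (nn : Fin k₂ → ℕ)
    (p : Fin k₁ → Lat n) (q : Fin k₂ → Lat n)
    (g h : Lat n → ℝ)
    (hg : g = fun x => 4 * Real.pi * ∑ j, (m j : ℝ) * dirac (p j) x)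
    (hh : h = fun x => 4 * Real.pi * ∑ j, (nn j : ℝ) * dirac (q j) x)
    (Ω : Set (Lat n)) (hfin : Ω.Finite) (hconn : PathConnectedIn Ω)
    (hp : ∀ j, p j ∈ Ω) (hq : ∀ j, q j ∈ Ω) :
    (∃ u v : ℕ → Lat n → ℝ, IterSeq Ω L lam g h u v) ∧
    (∀ u v u' v' : ℕ → Lat n → ℝ,
      IterSeq Ω L lam g h u v → IterSeq Ω L lam g h u' v' → u = u' ∧ v = v') ∧
    (∀ u v : ℕ → Lat n → ℝ, IterSeq Ω L lam g h u v →
      ∀ (k : ℕ) (x : Lat n), u (k + 1) x ≤ u k x ∧ v (k + 1) x ≤ v k x) := by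
  simp only [iterSeq_iff_isIterScheme, hg, hh]
  exact iterative_scheme_exists_unique_monotone_general positiveMaximumPrinciple_laplLinearMap hfin
    (by linarith) hlam.le (by linarith) (fun x _ => four_pi_mul_sum_dirac_nonneg m p x)
    fun x _ => four_pi_mul_sum_dirac_nonneg nn q x

end CS
end
end

section
/- Let n ≥ 2, λ > 0, L > 2λ, let g = 4π ∑_{j=1}^{k₁} m_j δ_{p_j}, h = 4π ∑_{j=1}^{k₂} n_j δ_{q_j} with m_j, n_j ∈ ℕ, and let Ω ⊂ ℤⁿ be a connected finite subset containing all the points p_j and q_j. Let (u_k, v_k) be the iterative sequence with u₀ = v₀ = 0, (Δ − L)u_k = λ e^{v_{k−1}} (e^{u_{k−1}} − 1) + g − L u_{k−1} in Ω, (Δ − L)v_k = λ e^{u_{k−1}} (e^{v_{k−1}} − 1) + h − L v_{k−1} in Ω, u_k = v_k = 0 on δΩ, and let (u_Ω, v_Ω) be its pointwise limit. Suppose W, V : Ω̄ → ℝ satisfy ΔW ≥ λ e^V (e^W − 1) + g in Ω, ΔV ≥ λ e^W (e^V − 1) + h in Ω, and W ≤ 0, V ≤ 0 on δΩ. Then for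 every k, W ≤ u_k and V ≤ v_k on Ω̄; in particular W ≤ u_Ω and V ≤ v_Ω. -/
/-!
A function on a finite set `Ω` that is nonpositive on `δΩ` and has positive Laplacian wherever it is
positive is nonpositive, because the Laplacian is nonpositive at a maximum. Applied to `W` and `V`,
this is the case `k = 0`; applied to differences, it is the comparison principle for `Δ - L`.

The scheme reads `(Δ - L) u_{k+1} = F(u_k, v_k) + g` with `F(a, b) = λ e^b (e^a - 1) - L a`, and `F`
is nonincreasing in both arguments on `a, b ≤ 0` once `L ≥ λ`. As `g ≥ 0`, `u_k, v_k ≤ 0` gives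
`(Δ - L) u_{k+1} ≥ F(0, 0) = 0`, so that `u_{k+1} ≤ 0`, and if moreover `W ≤ u_k` and `V ≤ v_k`,
then `(Δ - L) W ≥ F(W, V) + g ≥ (Δ - L) u_{k+1}`, so that `W ≤ u_{k+1}`. Exchanging the two
components gives the bounds for `v_{k+1}`.
-/

open Filter Real

noncomputable section

namespace CS

section Lattice

variable {n : ℕ}

lemma adjacent_add_unitVec (x : Lat n) (i : Fin n) : adjacent x (x + unitVec i) := by
  simp [adjacent, unitVec, apply_ite Int.natAbs]

lemma adjacent_sub_unitVec (x : Lat n) (i : Fin n) : adjacent x (x - unitVec i) := by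
  simp [adjacent, unitVec, apply_ite Int.natAbs]

lemma mem_union_bdry_of_adjacent {Ω : Set (Lat n)} {x y : Lat n} (hx : x ∈ Ω)
    (hxy : adjacent x y) : y ∈ Ω ∪ bdry Ω :=
  (em (y ∈ Ω)).imp_right fun hy => ⟨hy, x, hx, hxy⟩

lemma lapl_zero (x : Lat n) : lapl 0 x = 0 := by
  simp [lapl]

lemma lapl_sub (u v : Lat n → ℝ) (x : Lat n) : lapl (u - v) x = lapl u x - lapl v x := by
  simp only [lapl, Pi.sub_apply, ← Finset.sum_sub_distrib]
  exact Finset.sum_congr rfl fun i _ => by ring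

lemma lapl_nonpos_of_forall_adjacent_le {u : Lat n → ℝ} {x : Lat n}
    (hu : ∀ y, adjacent x y → u y ≤ u x) : lapl u x ≤ 0 :=
  Finset.sum_nonpos fun i _ => by
    linarith [hu _ (adjacent_add_unitVec x i), hu _ (adjacent_sub_unitVec x i)]

lemma dirac_nonneg (p x : Lat n) : 0 ≤ dirac p x := by
  unfold dirac
  split_ifs <;> norm_num

end Lattice

section MaximumPrinciple

variable {n : ℕ} {Ω : Set (Lat n)}

theorem nonpos_of_lapl_pos (hfin : Ω.Finite) {w : Lat n → ℝ}
    (hw : ∀ x ∈ Ω, 0 < w x → 0 < lapl w x) (hwb : ∀ x ∈ bdry Ω, w x ≤ 0) :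
    ∀ x ∈ Ω ∪ bdry Ω, w x ≤ 0 := by
  rintro x (hx | hx)
  · obtain ⟨z, hz, hmax⟩ := Set.exists_max_image Ω w hfin ⟨x, hx⟩
    by_contra! hpos
    have hzpos : 0 < w z := hpos.trans_le (hmax x hx)
    have hadj : ∀ y, adjacent z y → w y ≤ w z := fun y hy =>
      (mem_union_bdry_of_adjacent hz hy).elim (hmax y) fun hyb => (hwb y hyb).trans hzpos.le
    exact (hw z hz hzpos).not_ge (lapl_nonpos_of_forall_adjacent_le hadj)
  · exact hwb x hx

theorem le_of_lapl_sub_mul_le (hfin : Ω.Finite) {L : ℝ} (hL : 0 < L) {w s : Lat n → ℝ}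
    (hws : ∀ x ∈ Ω, lapl s x - L * s x ≤ lapl w x - L * w x) (hb : ∀ x ∈ bdry Ω, w x ≤ s x) :
    ∀ x ∈ Ω ∪ bdry Ω, w x ≤ s x := by
  have hlapl_pos : ∀ x ∈ Ω, 0 < (w - s) x → 0 < lapl (w - s) x := fun x hx hpos => calc
    0 < L * (w - s) x := mul_pos hL hpos
    _ = L * w x - L * s x := mul_sub L (w x) (s x)
    _ ≤ lapl w x - lapl s x := by linarith [hws x hx]
    _ = lapl (w - s) x := (lapl_sub w s x).symm
  exact fun x hx => sub_nonpos.1 <|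
    nonpos_of_lapl_pos hfin hlapl_pos (fun y hy => sub_nonpos.2 (hb y hy)) x hx

end MaximumPrinciple

section Reaction

/-- The nonlinearity `F(a, b) = λ e^b (e^a - 1) - L a` of the scheme, which in this notation reads
`(Δ - L) u_{k+1} = F(u_k, v_k) + g` and `(Δ - L) v_{k+1} = F(v_k, u_k) + h`. -/
def reaction (lam L a b : ℝ) : ℝ := lam * exp b * (exp a - 1) - L * a

lemma reaction_zero_zero (lam L : ℝ) : reaction lam L 0 0 = 0 := by
  simp [reaction]

lemma exp_sub_exp_le_mul_sub (x y : ℝ) : exp x - exp y ≤ exp x * (x - y) := by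
  have hexp : exp y = exp x * exp (y - x) := by rw [← exp_add, add_sub_cancel]
  have htangent : exp x * (y - x + 1) ≤ exp x * exp (y - x) :=
    mul_le_mul_of_nonneg_left (add_one_le_exp _) (exp_nonneg x)
  linarith

variable {lam L a a' b b' : ℝ}

lemma reaction_anti_left (hlam : 0 ≤ lam) (hL : lam ≤ L) (ha : a ≤ a') (ha' : a' ≤ 0)
    (hb : b ≤ 0) : reaction lam L a' b ≤ reaction lam L a b := by
  have hincrement : lam * exp b * (exp a' - exp a) ≤ L * (a' - a) := calc
    lam * exp b * (exp a' - exp a) ≤ lam * exp b * (exp a' * (a' - a)) := by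
      gcongr; exact exp_sub_exp_le_mul_sub a' a
    _ = lam * exp (b + a') * (a' - a) := by rw [exp_add]; ring
    _ ≤ L * (a' - a) := by
      refine mul_le_mul_of_nonneg_right ?_ (sub_nonneg.2 ha)
      exact (mul_le_of_le_one_right hlam (exp_le_one_iff.2 (add_nonpos hb ha'))).trans hL
  unfold reaction
  linarith

lemma reaction_anti_right (hlam : 0 ≤ lam) (ha : a ≤ 0) (hb : b ≤ b') :
    reaction lam L a b' ≤ reaction lam L a b := by
  have hcoeff : lam * exp b ≤ lam * exp b' := by gcongr
  exact sub_le_sub_right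
    (mul_le_mul_of_nonpos_right hcoeff (sub_nonpos.2 (exp_le_one_iff.2 ha))) _

lemma reaction_anti (hlam : 0 ≤ lam) (hL : lam ≤ L) (ha : a ≤ a') (ha' : a' ≤ 0) (hb : b ≤ b')
    (hb' : b' ≤ 0) : reaction lam L a' b' ≤ reaction lam L a b :=
  (reaction_anti_left hlam hL ha ha' hb').trans (reaction_anti_right hlam (ha.trans ha') hb)

end Reaction

/-- `w` is a subsolution of the Dirichlet problem `Δw = λ e^z (e^w - 1) + f` in `Ω`, `w = 0` on
`δΩ`, in which `z` is given. A subsolution of the coupled system is a pair `(W, V)` with each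
component a subsolution relative to the other. -/
structure IsSubsolution {n : ℕ} (Ω : Set (Lat n)) (lam : ℝ) (f z w : Lat n → ℝ) : Prop where
  le_lapl : ∀ x ∈ Ω, lam * exp (z x) * (exp (w x) - 1) + f x ≤ lapl w x
  nonpos_bdry : ∀ x ∈ bdry Ω, w x ≤ 0

section Scheme

variable {n : ℕ} {Ω : Set (Lat n)} {lam L : ℝ} {f g h w z : Lat n → ℝ} {u v : ℕ → Lat n → ℝ}
  {k : ℕ}

namespace IsSubsolution

theorem nonpos (hw : IsSubsolution Ω lam f z w) (hfin : Ω.Finite) (hlam : 0 < lam)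
    (hf : ∀ x ∈ Ω, 0 ≤ f x) : ∀ x ∈ Ω ∪ bdry Ω, w x ≤ 0 := by
  refine nonpos_of_lapl_pos hfin (fun x hx hpos => ?_) hw.nonpos_bdry
  have hexp : 0 < exp (w x) - 1 := sub_pos.2 (one_lt_exp_iff.2 hpos)
  calc
    0 < lam * exp (z x) * (exp (w x) - 1) := by positivity
    _ ≤ lam * exp (z x) * (exp (w x) - 1) + f x := le_add_of_nonneg_right (hf x hx)
    _ ≤ lapl w x := hw.le_lapl x hx

lemma reaction_add_le (hw : IsSubsolution Ω lam f z w) (L : ℝ) {x : Lat n} (hx : x ∈ Ω) :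
    reaction lam L (w x) (z x) + f x ≤ lapl w x - L * w x := by
  unfold reaction
  linarith [hw.le_lapl x hx]

end IsSubsolution

namespace IterSeq

lemma swap (hs : IterSeq Ω L lam g h u v) : IterSeq Ω L lam h g v u :=
  let ⟨hu₀, hv₀, hu, hv, hu_off, hv_off⟩ := hs
  ⟨hv₀, hu₀, hv, hu, hv_off, hu_off⟩

lemma zero_fst (hs : IterSeq Ω L lam g h u v) (x : Lat n) : u 0 x = 0 :=
  hs.1 x

lemma succ_fst_eq_zero (hs : IterSeq Ω L lam g h u v) (k : ℕ) {x : Lat n} (hx : x ∉ Ω) :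
    u (k + 1) x = 0 :=
  hs.2.2.2.2.1 k x hx

lemma lapl_succ_fst_sub_mul (hs : IterSeq Ω L lam g h u v) (k : ℕ) {x : Lat n} (hx : x ∈ Ω) :
    lapl (u (k + 1)) x - L * u (k + 1) x = reaction lam L (u k x) (v k x) + g x := by
  rw [hs.2.2.1 k x hx, reaction]
  ring

lemma succ_fst_nonpos (hs : IterSeq Ω L lam g h u v) (hfin : Ω.Finite) (hlam : 0 ≤ lam)
    (hL : lam ≤ L) (hL₀ : 0 < L) (hg : ∀ x ∈ Ω, 0 ≤ g x) (hu : ∀ x ∈ Ω ∪ bdry Ω, u k x ≤ 0)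
    (hv : ∀ x ∈ Ω ∪ bdry Ω, v k x ≤ 0) : ∀ x ∈ Ω ∪ bdry Ω, u (k + 1) x ≤ 0 := by
  refine le_of_lapl_sub_mul_le hfin hL₀ (s := 0) (fun x hx => ?_)
    fun x hx => (hs.succ_fst_eq_zero k hx.1).le
  calc
    lapl 0 x - L * 0 = reaction lam L 0 0 := by rw [lapl_zero, reaction_zero_zero]; ring
    _ ≤ reaction lam L (u k x) (v k x) :=
      reaction_anti hlam hL (hu x (.inl hx)) le_rfl (hv x (.inl hx)) le_rfl
    _ ≤ reaction lam L (u k x) (v k x) + g x := le_add_of_nonneg_right (hg x hx)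
    _ = lapl (u (k + 1)) x - L * u (k + 1) x := (hs.lapl_succ_fst_sub_mul k hx).symm

theorem nonpos (hs : IterSeq Ω L lam g h u v) (hfin : Ω.Finite) (hlam : 0 ≤ lam) (hL : lam ≤ L)
    (hL₀ : 0 < L) (hg : ∀ x ∈ Ω, 0 ≤ g x) (hh : ∀ x ∈ Ω, 0 ≤ h x) (k : ℕ) :
    (∀ x ∈ Ω ∪ bdry Ω, u k x ≤ 0) ∧ ∀ x ∈ Ω ∪ bdry Ω, v k x ≤ 0 := by
  induction k with
  | zero => exact ⟨fun x _ => (hs.zero_fst x).le, fun x _ => (hs.swap.zero_fst x).le⟩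
  | succ k ih =>
    exact ⟨hs.succ_fst_nonpos hfin hlam hL hL₀ hg ih.1 ih.2,
      hs.swap.succ_fst_nonpos hfin hlam hL hL₀ hh ih.2 ih.1⟩

lemma le_succ_fst (hs : IterSeq Ω L lam g h u v) (hw : IsSubsolution Ω lam g z w)
    (hfin : Ω.Finite) (hlam : 0 ≤ lam) (hL : lam ≤ L) (hL₀ : 0 < L)
    (hu : ∀ x ∈ Ω ∪ bdry Ω, u k x ≤ 0) (hv : ∀ x ∈ Ω ∪ bdry Ω, v k x ≤ 0)
    (hwu : ∀ x ∈ Ω ∪ bdry Ω, w x ≤ u k x) (hzv : ∀ x ∈ Ω ∪ bdry Ω, z x ≤ v k x) :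
    ∀ x ∈ Ω ∪ bdry Ω, w x ≤ u (k + 1) x := by
  refine le_of_lapl_sub_mul_le hfin hL₀ (fun x hx => ?_)
    fun x hx => (hw.nonpos_bdry x hx).trans_eq (hs.succ_fst_eq_zero k hx.1).symm
  have hx' : x ∈ Ω ∪ bdry Ω := .inl hx
  calc
    lapl (u (k + 1)) x - L * u (k + 1) x = reaction lam L (u k x) (v k x) + g x :=
      hs.lapl_succ_fst_sub_mul k hx
    _ ≤ reaction lam L (w x) (z x) + g x := by
      gcongr
      exact reaction_anti hlam hL (hwu x hx') (hu x hx') (hzv x hx') (hv x hx')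
    _ ≤ lapl w x - L * w x := hw.reaction_add_le L hx

theorem subsolution_le {W V : Lat n → ℝ} (hs : IterSeq Ω L lam g h u v)
    (hW : IsSubsolution Ω lam g V W) (hV : IsSubsolution Ω lam h W V) (hfin : Ω.Finite)
    (hlam : 0 < lam) (hL : lam ≤ L) (hg : ∀ x ∈ Ω, 0 ≤ g x) (hh : ∀ x ∈ Ω, 0 ≤ h x) (k : ℕ) :
    (∀ x ∈ Ω ∪ bdry Ω, W x ≤ u k x) ∧ ∀ x ∈ Ω ∪ bdry Ω, V x ≤ v k x := by
  induction k with
  | zero =>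
    exact ⟨fun x hx => (hW.nonpos hfin hlam hg x hx).trans_eq (hs.zero_fst x).symm,
      fun x hx => (hV.nonpos hfin hlam hh x hx).trans_eq (hs.swap.zero_fst x).symm⟩
  | succ k ih =>
    have hL₀ : 0 < L := hlam.trans_le hL
    obtain ⟨hu, hv⟩ := hs.nonpos hfin hlam.le hL hL₀ hg hh k
    exact ⟨hs.le_succ_fst hW hfin hlam.le hL hL₀ hu hv ih.1 ih.2,
      hs.swap.le_succ_fst hV hfin hlam.le hL hL₀ hv hu ih.2 ih.1⟩

end IterSeq

end Scheme

theorem iterative_scheme_comparison_general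
    {n : ℕ} {lam L : ℝ} (hlam : 0 < lam) (hL : lam ≤ L) {g h : Lat n → ℝ} {Ω : Set (Lat n)}
    (hg : ∀ x ∈ Ω, 0 ≤ g x) (hh : ∀ x ∈ Ω, 0 ≤ h x) (hfin : Ω.Finite)
    {u v : ℕ → Lat n → ℝ} (hiter : IterSeq Ω L lam g h u v) {W V : Lat n → ℝ}
    (hW : IsSubsolution Ω lam g V W) (hV : IsSubsolution Ω lam h W V) :
    (∀ k : ℕ, ∀ x ∈ Ω ∪ bdry Ω, W x ≤ u k x ∧ V x ≤ v k x) ∧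
    (∀ uΩ vΩ : Lat n → ℝ,
      (∀ x, Tendsto (fun k => u k x) atTop (nhds (uΩ x))) →
      (∀ x, Tendsto (fun k => v k x) atTop (nhds (vΩ x))) →
      ∀ x ∈ Ω ∪ bdry Ω, W x ≤ uΩ x ∧ V x ≤ vΩ x) := by
  have hle : ∀ k : ℕ, ∀ x ∈ Ω ∪ bdry Ω, W x ≤ u k x ∧ V x ≤ v k x := fun k x hx =>
    (hiter.subsolution_le hW hV hfin hlam hL hg hh k).imp (· x hx) (· x hx)
  exact ⟨hle, fun uΩ vΩ hu hv x hx =>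
    ⟨ge_of_tendsto' (hu x) fun k => (hle k x hx).1,
      ge_of_tendsto' (hv x) fun k => (hle k x hx).2⟩⟩

/-- comparison with sub-solutions: if ΔW ≥ λe^V(e^W − 1) + g and
ΔV ≥ λe^W(e^V − 1) + h in Ω with W, V ≤ 0 on δΩ, then W ≤ u_k and V ≤ v_k on Ω̄
for every k; in particular W ≤ u_Ω and V ≤ v_Ω for the pointwise limits. -/
theorem iterative_scheme_comparison
    {n : ℕ} (hn : 2 ≤ n) (lam L : ℝ) (hlam : 0 < lam) (hL : 2 * lam < L)
    {k₁ k₂ : ℕ} (m : Fin k₁ → ℕ) (nn : Fin k₂ → ℕ)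
    (p : Fin k₁ → Lat n) (q : Fin k₂ → Lat n)
    (g h : Lat n → ℝ)
    (hg : g = fun x => 4 * Real.pi * ∑ j, (m j : ℝ) * dirac (p j) x)
    (hh : h = fun x => 4 * Real.pi * ∑ j, (nn j : ℝ) * dirac (q j) x)
    (Ω : Set (Lat n)) (hfin : Ω.Finite) (hconn : PathConnectedIn Ω)
    (hp : ∀ j, p j ∈ Ω) (hq : ∀ j, q j ∈ Ω)
    (u v : ℕ → Lat n → ℝ) (hiter : IterSeq Ω L lam g h u v)
    (W V : Lat n → ℝ)
    (hW : ∀ x ∈ Ω, lam * Real.exp (V x) * (Real.exp (W x) - 1) + g x ≤ lapl W x)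
    (hV : ∀ x ∈ Ω, lam * Real.exp (W x) * (Real.exp (V x) - 1) + h x ≤ lapl V x)
    (hWb : ∀ x ∈ bdry Ω, W x ≤ 0) (hVb : ∀ x ∈ bdry Ω, V x ≤ 0) :
    (∀ k : ℕ, ∀ x ∈ Ω ∪ bdry Ω, W x ≤ u k x ∧ V x ≤ v k x) ∧
    (∀ uΩ vΩ : Lat n → ℝ,
      (∀ x, Filter.Tendsto (fun k => u k x) Filter.atTop (nhds (uΩ x))) →
      (∀ x, Filter.Tendsto (fun k => v k x) Filter.atTop (nhds (vΩ x))) →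
      ∀ x ∈ Ω ∪ bdry Ω, W x ≤ uΩ x ∧ V x ≤ vΩ x) := by
  subst hg hh
  exact iterative_scheme_comparison_general hlam (by linarith)
    (fun x _ => four_pi_mul_sum_dirac_nonneg m p x)
    (fun x _ => four_pi_mul_sum_dirac_nonneg nn q x) hfin hiter ⟨hW, hWb⟩ ⟨hV, hVb⟩

end CS
end
end
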